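/- If M is a von Neumann algebra with no central summands of type I₁, then for every nonzero central projection Z of M there exists a core-free projection P ∈ M whose central carrier equals Z. -/

import Mathlib

variable {H : Type*} [NormedAddCommGroup H] [InnerProductSpace ℂ H] [CompleteSpace H]

/-- `P` is a projection (self-adjoint idempotent) belonging to the
von Neumann algebra `M`. -/
def VNProjection (M : VonNeumannAlgebra H) (P : H →L[ℂ] H) : Prop :=
  P ∈ M ∧ IsSelfAdjoint P ∧ P * P = P

/-- `Z` is a central projection of `M`: a projection in `M` commuting with every
element of `M`. -/
def VNCentralProjection (M : VonNeumannAlgebra H) (Z : H →L[ℂ] H) : Prop :=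
  VNProjection M Z ∧ ∀ T ∈ M, Z * T = T * Z

/-- `P` is core-free: the only central projection `Q` of `M` with `Q ≤ P` is `0`. -/
def VNCoreFree (M : VonNeumannAlgebra H) (P : H →L[ℂ] H) : Prop :=
  ∀ Q, VNCentralProjection M Q → Q * P = Q → Q = 0

/-- `Z` is the central carrier of `A`: the smallest central projection of `M`
with `Z * A = A`. -/
def VNCentralCarrier (M : VonNeumannAlgebra H) (A Z : H →L[ℂ] H) : Prop :=
  VNCentralProjection M Z ∧ Z * A = A ∧
    ∀ Q, VNCentralProjection M Q → Q * A = A → Z * Q = Z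

/-- `M` has no central summands of type I₁: for every nonzero central projection `Z`
there are `A, B ∈ M` with `Z * (A * B - B * A) ≠ 0`. -/
def VNNoTypeI1 (M : VonNeumannAlgebra H) : Prop :=
  ∀ Z, VNCentralProjection M Z → Z ≠ 0 → ∃ A ∈ M, ∃ B ∈ M, Z * (A * B - B * A) ≠ 0

/-! Call projections centrally orthogonal if the central carrier of each annihilates the other.
If `Q` is a noncentral projection, removing from `Q` the largest central projection below it leaves
a nonzero core-free projection. Noncentral projections exist below every nonzero central projection,
because `M` is the norm-closed span of its projections. Hence, if `E` is the supremum of a maximal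
family of centrally orthogonal core-free projections, no room is left outside its central carrier,
which is therefore `1`. Central orthogonality makes `E` core-free, and cutting it down by `Z` gives
the projection sought. -/

section RangeProjection

variable {𝕜 E : Type*} [RCLike 𝕜] [NormedAddCommGroup E] [InnerProductSpace 𝕜 E] [CompleteSpace E]

/-- The orthogonal projection onto the closed linear span of the ranges of the operators in `S`.
For a set of projections this is their supremum. -/
noncomputable def rangeProjection (S : Set (E →L[𝕜] E)) : E →L[𝕜] E :=
  (⨆ A ∈ S, A.range).topologicalClosure.starProjection

theorem isStarProjection_rangeProjection (S : Set (E →L[𝕜] E)) :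
    IsStarProjection (rangeProjection S) :=
  isStarProjection_starProjection

theorem rangeProjection_mul_of_mem {S : Set (E →L[𝕜] E)} {A : E →L[𝕜] E} (hA : A ∈ S) :
    rangeProjection S * A = A := by
  ext x
  refine Submodule.starProjection_eq_self_iff.2 (Submodule.le_topologicalClosure _ ?_)
  exact Submodule.mem_iSup_of_mem A (Submodule.mem_iSup_of_mem hA ⟨x, rfl⟩)

theorem mul_rangeProjection_of_mem {S : Set (E →L[𝕜] E)} {A : E →L[𝕜] E} (hA : A ∈ S)
    (hA_sa : IsSelfAdjoint A) : A * rangeProjection S = A := by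
  have h := congr(star $(rangeProjection_mul_of_mem hA))
  rwa [star_mul, hA_sa.star_eq, (isStarProjection_rangeProjection S).isSelfAdjoint.star_eq] at h

theorem mul_rangeProjection_eq_zero_iff {S : Set (E →L[𝕜] E)} {X : E →L[𝕜] E} :
    X * rangeProjection S = 0 ↔ ∀ A ∈ S, X * A = 0 := by
  refine ⟨fun h A hA => ?_, fun h => ?_⟩
  · rw [← rangeProjection_mul_of_mem hA, ← mul_assoc, h, zero_mul]
  · have hle : (⨆ A ∈ S, A.range).topologicalClosure ≤ X.ker := by
      refine Submodule.topologicalClosure_minimal _ (iSup₂_le fun A hA => ?_) X.isClosed_ker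
      rintro _ ⟨x, rfl⟩
      exact congr($(h A hA) x)
    ext x
    exact hle (Submodule.starProjection_apply_mem _ x)

end RangeProjection

section Projections

variable {M : VonNeumannAlgebra H} {P Q Z : H →L[ℂ] H}

theorem VNProjection.isStarProjection (hP : VNProjection M P) : IsStarProjection P :=
  ⟨hP.2.2, hP.2.1⟩

theorem VNProjection.one_sub (hP : VNProjection M P) : VNProjection M (1 - P) :=
  ⟨sub_mem (one_mem M) hP.1, hP.isStarProjection.one_sub.isSelfAdjoint,
    hP.isStarProjection.one_sub.isIdempotentElem⟩

theorem VNCentralProjection.mul_vnProjection (hZ : VNCentralProjection M Z)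
    (hP : VNProjection M P) : VNProjection M (Z * P) :=
  have h := hZ.1.isStarProjection.mul hP.isStarProjection (hZ.2 P hP.1)
  ⟨mul_mem hZ.1.1 hP.1, h.isSelfAdjoint, h.isIdempotentElem⟩

theorem VNCentralProjection.one_sub (hZ : VNCentralProjection M Z) :
    VNCentralProjection M (1 - Z) :=
  ⟨hZ.1.one_sub, fun T hT => by rw [sub_mul, mul_sub, hZ.2 T hT, one_mul, mul_one]⟩

theorem VNCentralProjection.mul (hZ : VNCentralProjection M Z) (hQ : VNCentralProjection M Q) :
    VNCentralProjection M (Z * Q) :=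
  ⟨hZ.mul_vnProjection hQ.1, fun T hT => by
    rw [mul_assoc, hQ.2 T hT, ← mul_assoc, hZ.2 T hT, mul_assoc]⟩

theorem rangeProjection_mem {S : Set (H →L[ℂ] H)}
    (hS : ∀ T ∈ M.commutant, ∀ A ∈ S, rangeProjection S * (T * A) = T * A) :
    rangeProjection S ∈ M := by
  have hE := isStarProjection_rangeProjection S
  rw [VonNeumannAlgebra.IsStarProjection.mem_iff hE]
  refine fun T hT =>
    (ContinuousLinearMap.IsIdempotentElem.range_mem_invtSubmodule_iff hE.isIdempotentElem).2 ?_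
  have h : (rangeProjection S * T - T) * rangeProjection S = 0 :=
    mul_rangeProjection_eq_zero_iff.2 fun A hA => by
      rw [sub_mul, mul_assoc, hS T hT A hA, sub_self]
  rwa [sub_mul, mul_assoc, sub_eq_zero] at h

theorem vnProjection_rangeProjection {S : Set (H →L[ℂ] H)} (hS : ∀ A ∈ S, A ∈ M) :
    VNProjection M (rangeProjection S) := by
  have hE := isStarProjection_rangeProjection S
  refine ⟨rangeProjection_mem fun T hT A hA => ?_, hE.isSelfAdjoint, hE.isIdempotentElem⟩
  rw [← VonNeumannAlgebra.mem_commutant_iff.1 hT A (hS A hA), ← mul_assoc,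
    rangeProjection_mul_of_mem hA]

end Projections

section SpanProjections

theorem norm_sub_algebraMap_half_norm_le {A : Type*} [CStarAlgebra A] [PartialOrder A]
    [StarOrderedRing A] {a : A} (ha : 0 ≤ a) :
    ‖a - algebraMap ℝ A (‖a‖ / 2)‖ ≤ ‖a‖ / 2 := by
  nontriviality A
  have hcfc : cfc (fun x : ℝ => x - ‖a‖ / 2) a = a - algebraMap ℝ A (‖a‖ / 2) := by
    rw [cfc_sub (fun x => x) (fun _ => ‖a‖ / 2) a, cfc_id' ℝ a, cfc_const (‖a‖ / 2) a]
  rw [← hcfc]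
  refine norm_cfc_le (by positivity) fun x hx => ?_
  have hx₀ : 0 ≤ x := spectrum_nonneg_of_nonneg ha hx
  have hx₁ : x ≤ ‖a‖ := (le_abs_self x).trans (spectrum.norm_le_norm_of_mem hx)
  rw [Real.norm_eq_abs, abs_le]
  constructor <;> linarith

variable {M : VonNeumannAlgebra H} {A B T : H →L[ℂ] H}

theorem cfcAbs_mem (hB : B ∈ M) : CFC.abs B ∈ M := by
  rw [← M.commutant_commutant, VonNeumannAlgebra.mem_commutant_iff]
  intro T hT
  have hcomm : Commute B T := VonNeumannAlgebra.mem_commutant_iff.1 hT B hB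
  have hcomm_star : Commute B (star T) :=
    VonNeumannAlgebra.mem_commutant_iff.1 (star_mem hT) B hB
  exact (hcomm.cfcAbs_left hcomm_star).symm

theorem exists_vnProjection_eq_cfcAbs_mul (hB : B ∈ M) (hB_sa : IsSelfAdjoint B) :
    ∃ P, VNProjection M P ∧ B = CFC.abs B * (2 * P - 1) := by
  set E := rangeProjection {CFC.abs B + B}
  have hE : VNProjection M E :=
    vnProjection_rangeProjection <| by rintro _ rfl; exact add_mem (cfcAbs_mem hB) hB
  have hadd : (CFC.abs B + B) * E = CFC.abs B + B :=
    mul_rangeProjection_of_mem rfl ((CFC.abs_nonneg B).isSelfAdjoint.add hB_sa)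
  have hsub : (CFC.abs B - B) * E = 0 := by
    refine mul_rangeProjection_eq_zero_iff.2 ?_
    rintro _ rfl
    have hcomm : Commute (CFC.abs B) B := CFC.commute_abs_self B hB_sa.isStarNormal
    rw [← hcomm.mul_self_sub_mul_self_eq', CFC.abs_mul_abs, hB_sa.star_eq, sub_self]
  refine ⟨E, hE, ?_⟩
  calc B = (CFC.abs B + B) + 0 - CFC.abs B := by abel
    _ = (CFC.abs B + B) * E + (CFC.abs B - B) * E - CFC.abs B := by rw [hadd, hsub]
    _ = CFC.abs B * (2 * E - 1) := by noncomm_ring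

/-- Iterating this estimate drives the remainder to `0`, so no spectral theorem is needed to see
that `M` is the norm-closed span of its projections. -/
theorem exists_vnProjection_norm_sub_smul_le (hB : B ∈ M) (hB_sa : IsSelfAdjoint B) :
    ∃ P, VNProjection M P ∧ ‖B - (‖B‖ / 2) • (2 * P - 1)‖ ≤ ‖B‖ / 2 := by
  obtain ⟨P, hP, hBP⟩ := exists_vnProjection_eq_cfcAbs_mul hB hB_sa
  refine ⟨P, hP, ?_⟩
  have hfactor : B - (‖B‖ / 2) • (2 * P - 1) =
      (CFC.abs B - algebraMap ℝ (H →L[ℂ] H) (‖B‖ / 2)) * (2 * P - 1) := by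
    rw [sub_mul, ← hBP, Algebra.smul_def]
  rw [hfactor, CStarRing.norm_mul_mem_unitary _ hP.isStarProjection.two_mul_sub_one_mem_unitary,
    ← CFC.norm_abs (a := B)]
  exact norm_sub_algebraMap_half_norm_le (CFC.abs_nonneg B)

theorem span_vnProjection_le_toSubmodule :
    Submodule.span ℂ {P | VNProjection M P} ≤ M.toStarSubalgebra.toSubalgebra.toSubmodule :=
  Submodule.span_le.2 fun _ hP => hP.1

theorem exists_mem_span_vnProjection_norm_sub_le (n : ℕ) (hB : B ∈ M) (hB_sa : IsSelfAdjoint B) :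
    ∃ C ∈ Submodule.span ℂ {P | VNProjection M P}, ‖B - C‖ ≤ ‖B‖ / 2 ^ n := by
  induction n generalizing B with
  | zero => exact ⟨0, zero_mem _, by simp⟩
  | succ n ih =>
    obtain ⟨P, hP, hle⟩ := exists_vnProjection_norm_sub_smul_le hB hB_sa
    have hsymm : 2 * P - 1 = P - (1 - P) := by noncomm_ring
    obtain ⟨D, hD⟩ : ∃ D, D = (‖B‖ / 2) • (P - (1 - P)) := ⟨_, rfl⟩
    rw [hsymm, ← hD] at hle
    have hDspan : D ∈ Submodule.span ℂ {P | VNProjection M P} :=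
      hD ▸ Submodule.smul_of_tower_mem _ (‖B‖ / 2)
        (sub_mem (Submodule.subset_span hP) (Submodule.subset_span hP.one_sub))
    have hDM : D ∈ M := span_vnProjection_le_toSubmodule hDspan
    have hD_sa : IsSelfAdjoint D :=
      hD ▸ IsSelfAdjoint.smul (IsSelfAdjoint.all (‖B‖ / 2)) (hP.2.1.sub hP.one_sub.2.1)
    obtain ⟨C, hC, hCle⟩ := ih (sub_mem hB hDM) (hB_sa.sub hD_sa)
    refine ⟨D + C, add_mem hDspan hC, ?_⟩
    calc ‖B - (D + C)‖ = ‖B - D - C‖ := by rw [sub_sub]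
      _ ≤ ‖B - D‖ / 2 ^ n := hCle
      _ ≤ ‖B‖ / 2 / 2 ^ n := by gcongr
      _ = ‖B‖ / 2 ^ (n + 1) := by rw [div_div, pow_succ']

theorem mem_closure_span_vnProjection_of_isSelfAdjoint (hB : B ∈ M) (hB_sa : IsSelfAdjoint B) :
    B ∈ (Submodule.span ℂ {P | VNProjection M P}).topologicalClosure := by
  choose C hC hBC using fun n => exists_mem_span_vnProjection_norm_sub_le n hB hB_sa
  have hlim : Filter.Tendsto (fun n : ℕ => ‖B‖ / 2 ^ n) Filter.atTop (nhds 0) :=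
    tendsto_const_nhds.div_atTop (tendsto_pow_atTop_atTop_of_one_lt one_lt_two)
  refine mem_closure_of_tendsto (f := C) (b := Filter.atTop) ?_ (.of_forall hC)
  rw [tendsto_iff_norm_sub_tendsto_zero]
  exact squeeze_zero (fun _ => norm_nonneg _) (fun n => norm_sub_rev B (C n) ▸ hBC n) hlim

theorem mem_closure_span_vnProjection (hA : A ∈ M) :
    A ∈ (Submodule.span ℂ {P | VNProjection M P}).topologicalClosure := by
  have hspan : (⟨A, hA⟩ : M.toStarSubalgebra) ∈
      Submodule.span ℂ (selfAdjoint M.toStarSubalgebra : Set M.toStarSubalgebra) := by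
    rw [span_selfAdjoint]
    exact Submodule.mem_top
  have hle : Submodule.span ℂ (selfAdjoint M.toStarSubalgebra : Set M.toStarSubalgebra) ≤
      (Submodule.span ℂ {P | VNProjection M P}).topologicalClosure.comap
        M.toStarSubalgebra.subtype.toAlgHom.toLinearMap :=
    Submodule.span_le.2 fun B hB =>
      mem_closure_span_vnProjection_of_isSelfAdjoint B.2 congr(($hB : H →L[ℂ] H))
  exact hle hspan

theorem commute_of_forall_vnProjection (hT : ∀ P, VNProjection M P → Commute P T) (hA : A ∈ M) :
    Commute A T := by
  have hle : (Submodule.span ℂ {P | VNProjection M P}).topologicalClosure ≤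
      (Subalgebra.centralizer ℂ {T}).toSubmodule := by
    refine Submodule.topologicalClosure_minimal _ (Submodule.span_le.2 fun P hP => ?_)
      (Set.isClosed_centralizer {T})
    exact Set.mem_centralizer_iff.2 fun | _, rfl => (hT P hP).symm
  exact (Set.mem_centralizer_iff.1 (hle (mem_closure_span_vnProjection hA)) T rfl).symm

end SpanProjections

section CentralCarrier

variable {M : VonNeumannAlgebra H} {A B P Q Z : H →L[ℂ] H}

/-- The projection onto the closed linear span of `M A H`, which is the central carrier of `A`
when `A ∈ M`. -/
noncomputable def centralCarrier (M : VonNeumannAlgebra H) (A : H →L[ℂ] H) : H →L[ℂ] H :=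
  rangeProjection ((· * A) '' M)

theorem centralCarrier_mul_self : centralCarrier M A * A = A :=
  rangeProjection_mul_of_mem ⟨1, one_mem M, one_mul A⟩

theorem vnCentralProjection_centralCarrier (hA : A ∈ M) :
    VNCentralProjection M (centralCarrier M A) := by
  refine ⟨vnProjection_rangeProjection ?_, ?_⟩
  · rintro _ ⟨T, hT, rfl⟩
    exact mul_mem hT hA
  · have hmem : centralCarrier M A ∈ M.commutant := by
      refine rangeProjection_mem fun T hT => ?_
      rw [M.commutant_commutant] at hT
      rintro _ ⟨U, hU, rfl⟩
      exact rangeProjection_mul_of_mem ⟨T * U, mul_mem hT hU, mul_assoc T U A⟩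
    exact fun T hT => (VonNeumannAlgebra.mem_commutant_iff.1 hmem T hT).symm

theorem VNCentralProjection.mul_centralCarrier_eq_zero_iff (hZ : VNCentralProjection M Z) :
    Z * centralCarrier M A = 0 ↔ Z * A = 0 := by
  refine ⟨fun h => ?_, fun h => mul_rangeProjection_eq_zero_iff.2 ?_⟩
  · rw [← centralCarrier_mul_self (M := M) (A := A), ← mul_assoc, h, zero_mul]
  · rintro _ ⟨T, hT, rfl⟩
    rw [← mul_assoc, hZ.2 T hT, mul_assoc, h, mul_zero]

theorem VNCentralProjection.centralCarrier_mul_eq_self (hZ : VNCentralProjection M Z) (hA : A ∈ M)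
    (h : Z * A = A) : centralCarrier M A * Z = centralCarrier M A := by
  have h₀ : (1 - Z) * centralCarrier M A = 0 :=
    hZ.one_sub.mul_centralCarrier_eq_zero_iff.2 (by rw [sub_mul, one_mul, h, sub_self])
  rw [sub_mul, one_mul, sub_eq_zero] at h₀
  rw [← hZ.2 _ (vnCentralProjection_centralCarrier hA).1.1, ← h₀]

theorem vnCentralCarrier_centralCarrier (hA : A ∈ M) :
    VNCentralCarrier M A (centralCarrier M A) :=
  ⟨vnCentralProjection_centralCarrier hA, centralCarrier_mul_self,
    fun _ hQ h => hQ.centralCarrier_mul_eq_self hA h⟩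

theorem VNCentralProjection.centralCarrier_mul_eq_zero (hZ : VNCentralProjection M Z)
    (hA : A ∈ M) (hZA : Z * A = A) (hZB : Z * B = 0) : centralCarrier M A * B = 0 := by
  rw [← hZ.centralCarrier_mul_eq_self hA hZA, mul_assoc, hZB, mul_zero]

theorem VNCentralCarrier.central_mul (hQ : VNCentralCarrier M A Q)
    (hZ : VNCentralProjection M Z) : VNCentralCarrier M (Z * A) (Z * Q) := by
  refine ⟨hZ.mul hQ.1, ?_, fun R hR hRA => ?_⟩
  · rw [mul_assoc, ← mul_assoc Q, ← hZ.2 Q hQ.1.1.1, mul_assoc Z Q, hQ.2.1, ← mul_assoc, hZ.1.2.2]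
  have hmul : (1 - (1 - R) * Z) * A = A := by
    rw [sub_mul, one_mul, mul_assoc, sub_mul, one_mul, hRA, sub_self, sub_zero]
  have hQR : Q * ((1 - R) * Z) = 0 := by
    simpa only [mul_sub, mul_one, sub_eq_self] using hQ.2.2 _ (hR.one_sub.mul hZ).one_sub hmul
  have hZQR : Z * Q * (1 - R) = 0 := by
    rw [hZ.2 Q hQ.1.1.1, mul_assoc, hZ.2 _ hR.one_sub.1.1, hQR]
  rwa [mul_sub, mul_one, sub_eq_zero, eq_comm] at hZQR

end CentralCarrier

section CoreFree

variable {M : VonNeumannAlgebra H} {P Z : H →L[ℂ] H}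

theorem VNCoreFree.central_mul (hP : VNCoreFree M P) (hZ : VNCentralProjection M Z) :
    VNCoreFree M (Z * P) := by
  intro R hR hRZP
  have hRZ : R * Z = R := by
    rw [hR.2 Z hZ.1.1, ← hRZP, ← mul_assoc R, hR.2 Z hZ.1.1, ← mul_assoc, ← mul_assoc, hZ.1.2.2]
  refine hP R hR ?_
  rwa [← mul_assoc, hRZ] at hRZP

/-- The projection in question is `P` minus the largest central projection below it. -/
theorem VNProjection.coreFree_centralCarrier_one_sub_mul (hP : VNProjection M P) :
    VNCoreFree M (centralCarrier M (1 - P) * P) := by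
  intro R hR hRP
  have hRP' : R * (1 - P) = 0 := by
    rw [mul_sub, mul_one, sub_eq_zero]
    nth_rewrite 2 [← hRP]
    rw [mul_assoc, mul_assoc, hP.2.2, hRP]
  have hRC : R * centralCarrier M (1 - P) = 0 := hR.mul_centralCarrier_eq_zero_iff.2 hRP'
  rw [← hRP, ← mul_assoc, hRC, zero_mul]

theorem VNProjection.central_of_centralCarrier_one_sub_mul_eq_zero (hP : VNProjection M P)
    (h : centralCarrier M (1 - P) * P = 0) : VNCentralProjection M P := by
  have hC := vnCentralProjection_centralCarrier hP.one_sub.1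
  have hCP : centralCarrier M (1 - P) * (1 - P) = 1 - P := centralCarrier_mul_self
  rw [mul_sub, mul_one, h, sub_zero] at hCP
  simpa [hCP] using hC.one_sub

theorem VNNoTypeI1.exists_vnProjection_not_central (hM : VNNoTypeI1 M)
    (hZ : VNCentralProjection M Z) (hZ₀ : Z ≠ 0) :
    ∃ P, VNProjection M P ∧ Z * P = P ∧ ¬ VNCentralProjection M P := by
  obtain ⟨A, hA, B, hB, hAB⟩ := hM Z hZ hZ₀
  by_contra! hcentral
  have hcomm : Commute A (Z * B) := by
    refine commute_of_forall_vnProjection (fun P hP => ?_) hA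
    have hZP := hcentral (Z * P) (hZ.mul_vnProjection hP) (by rw [← mul_assoc, hZ.1.2.2])
    calc P * (Z * B) = Z * P * B := by rw [← mul_assoc, hZ.2 P hP.1]
      _ = B * (Z * P) := hZP.2 B hB
      _ = Z * B * P := by rw [← mul_assoc, hZ.2 B hB]
  apply hAB
  rw [mul_sub, ← mul_assoc, hZ.2 A hA, mul_assoc, hcomm.eq, mul_assoc, sub_self]

theorem VNNoTypeI1.exists_coreFree_ne_zero (hM : VNNoTypeI1 M)
    (hZ : VNCentralProjection M Z) (hZ₀ : Z ≠ 0) :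
    ∃ P, VNProjection M P ∧ VNCoreFree M P ∧ Z * P = P ∧ P ≠ 0 := by
  obtain ⟨Q, hQ, hZQ, hQcentral⟩ := hM.exists_vnProjection_not_central hZ hZ₀
  have hC := vnCentralProjection_centralCarrier hQ.one_sub.1
  refine ⟨centralCarrier M (1 - Q) * Q, hC.mul_vnProjection hQ,
    hQ.coreFree_centralCarrier_one_sub_mul, ?_,
    mt hQ.central_of_centralCarrier_one_sub_mul_eq_zero hQcentral⟩
  rw [← mul_assoc, hZ.2 _ hC.1.1, mul_assoc, hZQ]

end CoreFree

section CentrallyOrthogonalFamilies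

variable {M : VonNeumannAlgebra H} {S : Set (H →L[ℂ] H)} {P : H →L[ℂ] H}

theorem centralCarrier_mul_rangeProjection (hS : ∀ P ∈ S, VNProjection M P)
    (horth : S.Pairwise fun P Q => centralCarrier M P * Q = 0) (hP : P ∈ S) :
    centralCarrier M P * rangeProjection S = P := by
  have hC := vnCentralProjection_centralCarrier (hS P hP).1
  have hPE : P * rangeProjection S = P := mul_rangeProjection_of_mem hP (hS P hP).2.1
  have hker : (centralCarrier M P - P) * rangeProjection S = 0 := by
    refine mul_rangeProjection_eq_zero_iff.2 fun Q hQ => ?_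
    rcases eq_or_ne P Q with rfl | hPQ
    · rw [sub_mul, centralCarrier_mul_self, (hS P hP).2.2, sub_self]
    · have hCQ := horth hP hQ hPQ
      rw [sub_mul, hCQ, ← centralCarrier_mul_self (M := M) (A := P), hC.2 P (hS P hP).1, mul_assoc,
        hCQ, mul_zero, sub_zero]
  rwa [sub_mul, hPE, sub_eq_zero] at hker

theorem coreFree_rangeProjection (hS : ∀ P ∈ S, VNProjection M P ∧ VNCoreFree M P)
    (horth : S.Pairwise fun P Q => centralCarrier M P * Q = 0) :
    VNCoreFree M (rangeProjection S) := by
  intro R hR hRE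
  rw [← hRE]
  refine mul_rangeProjection_eq_zero_iff.2 fun P hP => ?_
  have hC := vnCentralProjection_centralCarrier (hS P hP).1.1
  have hRC : R * centralCarrier M P = R * P := by
    calc R * centralCarrier M P = centralCarrier M P * (R * rangeProjection S) := by
          rw [hRE, hR.2 _ hC.1.1]
      _ = R * (centralCarrier M P * rangeProjection S) := by
          rw [← mul_assoc, ← hR.2 _ hC.1.1, mul_assoc]
      _ = R * P := by
          rw [centralCarrier_mul_rangeProjection (fun Q hQ => (hS Q hQ).1) horth hP]
  rw [← hRC]
  refine (hS P hP).2 _ (hR.mul hC) ?_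
  rw [mul_assoc, centralCarrier_mul_self, hRC]

theorem exists_maximal_forall_and_pairwise {α : Type*} (p : α → Prop) (r : α → α → Prop) :
    ∃ S : Set α, Maximal (fun S => (∀ x ∈ S, p x) ∧ S.Pairwise r) S := by
  refine zorn_subset {S | (∀ x ∈ S, p x) ∧ S.Pairwise r} fun c hc hchain =>
    ⟨⋃₀ c, ⟨?_, ?_⟩, fun s => Set.subset_sUnion_of_mem⟩
  · rintro x ⟨s, hs, hxs⟩
    exact (hc hs).1 x hxs
  · exact (Set.pairwise_sUnion hchain.directedOn).2 fun s hs => (hc hs).2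

theorem VNNoTypeI1.exists_coreFree_centralCarrier_eq_one (hM : VNNoTypeI1 M) :
    ∃ P, VNProjection M P ∧ VNCoreFree M P ∧ centralCarrier M P = 1 := by
  obtain ⟨S, hS⟩ := exists_maximal_forall_and_pairwise
    (fun P => VNProjection M P ∧ VNCoreFree M P) fun P Q => centralCarrier M P * Q = 0
  obtain ⟨hproj, horth⟩ := hS.prop
  have hE : VNProjection M (rangeProjection S) :=
    vnProjection_rangeProjection fun P hP => (hproj P hP).1.1
  refine ⟨rangeProjection S, hE, coreFree_rangeProjection hproj horth, ?_⟩
  by_contra hne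
  set W := 1 - centralCarrier M (rangeProjection S)
  have hW : VNCentralProjection M W := (vnCentralProjection_centralCarrier hE.1).one_sub
  have hWE : W * rangeProjection S = 0 := by
    rw [sub_mul, one_mul, centralCarrier_mul_self, sub_self]
  have hWS : ∀ Q ∈ S, W * Q = 0 := mul_rangeProjection_eq_zero_iff.1 hWE
  obtain ⟨P, hP, hPcore, hWP, hP₀⟩ :=
    hM.exists_coreFree_ne_zero hW (sub_ne_zero.2 (Ne.symm hne))
  have hinsert : (insert P S).Pairwise fun P Q => centralCarrier M P * Q = 0 :=
    horth.insert fun Q hQ _ =>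
      ⟨hW.centralCarrier_mul_eq_zero hP.1 hWP (hWS Q hQ),
        hW.one_sub.centralCarrier_mul_eq_zero (hproj Q hQ).1.1
          (by rw [sub_mul, one_mul, hWS Q hQ, sub_zero])
          (by rw [sub_mul, one_mul, hWP, sub_self])⟩
  have hPS : P ∈ S :=
    hS.le_of_ge ⟨Set.forall_mem_insert.2 ⟨⟨hP, hPcore⟩, hproj⟩, hinsert⟩ (Set.subset_insert P S)
      (Set.mem_insert P S)
  exact hP₀ (by rw [← hWP, hWS P hPS])

end CentrallyOrthogonalFamilies

/-- **Lemma 2.1 (i).** In a von Neumann algebra with no central summands of type I₁,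
every nonzero central projection is the central carrier of a core-free projection. -/
theorem exists_corefree_projection_with_central_carrier (M : VonNeumannAlgebra H)
    (hM : VNNoTypeI1 M) :
    ∀ Z : H →L[ℂ] H, VNCentralProjection M Z → Z ≠ 0 →
      ∃ P : H →L[ℂ] H, VNProjection M P ∧ VNCoreFree M P ∧ VNCentralCarrier M P Z := by
  intro Z hZ _
  obtain ⟨P, hP, hPcore, hPone⟩ := hM.exists_coreFree_centralCarrier_eq_one
  refine ⟨Z * P, hZ.mul_vnProjection hP, hPcore.central_mul hZ, ?_⟩
  simpa only [hPone, mul_one] using (vnCentralCarrier_centralCarrier hP.1).central_mul hZ
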